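/- For every n ≥ 1, every measurable function f : X → [1,∞), and every measurable φ : X → ℝ with sup_{x∈X} |φ(x)|/f(x) < ∞, one has |ξP^n φ − ξ'P^n φ| ≤ (sup_{x∈X} |φ(x)|/f(x)) · E*_{ξ⊗ξ'}[(f(X_n) + f(X'_n)) (1−ε)^{N_{n−1}}]. -/

import Mathlib

open MeasureTheory ProbabilityTheory Set
open scoped ENNReal

/-- `iterMeas P ξ n = ξ Pⁿ`. -/
noncomputable def iterMeas {X : Type*} [MeasurableSpace X] (P : Kernel X X) (ξ : Measure X) :
    ℕ → Measure X
  | 0 => ξ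
  | n + 1 => (iterMeas P ξ n).bind (fun x => P x)

/-- Expectation `E_y[φ(X₀,…,Xₙ)]` for the Markov chain with kernel `κ` started at `y`. -/
noncomputable def kexp {Y : Type*} [MeasurableSpace Y] (κ : Kernel Y Y) :
    (n : ℕ) → Y → ((Fin (n + 1) → Y) → ℝ≥0∞) → ℝ≥0∞
  | 0, y, φ => φ (fun _ => y)
  | n + 1, y, φ => ∫⁻ y', kexp κ n y' (fun v => φ (Fin.cons y v)) ∂(κ y)

/-- Expectation `E_μ[φ(X₀,…,Xₙ)]`. -/
noncomputable def chainExp {Y : Type*} [MeasurableSpace Y] (κ : Kernel Y Y) (μ : Measure Y)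
    (n : ℕ) (φ : (Fin (n + 1) → Y) → ℝ≥0∞) : ℝ≥0∞ :=
  ∫⁻ y, kexp κ n y φ ∂μ

/-!
Keep only the mass of the coupled chain that has not yet merged: let `Q(p, ·) = r(p) P*(p, ·)`, with
`r = 1 - ε` on `C̄` and `r = 1` off `C̄`, and let `γₙ = (ξ ⊗ ξ') Qⁿ`. The mass `ε ν_p` dropped at
`p = (x, x') ∈ C̄` is common to `P(x, ·)` and `P(x', ·)`, so `ξPⁿ - ξ'Pⁿ` is at every time `n` the
difference of the two marginals of `γₙ`. Hence `|ξPⁿφ - ξ'Pⁿφ| ≤ ∫ |φ(x)| + |φ(x')| dγₙ(x, x')`, and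
by the Feynman–Kac formula an integral against `γₙ` is an `E*`-expectation weighted by the product
`r(X̄₀) ⋯ r(X̄ₙ₋₁) = (1 - ε)^{N_{n-1}}`.
-/

section FeynmanKac

variable {Y : Type*}

/-- The Feynman–Kac functional `F(yₙ) r(y₀) ⋯ r(yₙ₋₁)` of a path: the value of `F` at the last
state, discounted by `r` at every earlier one. -/
noncomputable def feynmanKac (r F : Y → ℝ≥0∞) (n : ℕ) (v : Fin (n + 1) → Y) : ℝ≥0∞ :=
  F (v (Fin.last n)) * ∏ i : Fin n, r (v i.castSucc)

lemma feynmanKac_pow (a : ℝ≥0∞) (N : Y → ℕ) (F : Y → ℝ≥0∞) (n : ℕ) :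
    feynmanKac (fun y => a ^ N y) F n =
      fun v => F (v (Fin.last n)) * a ^ ∑ i : Fin n, N (v i.castSucc) :=
  funext fun _ => by rw [feynmanKac, Finset.prod_pow_eq_pow_sum]

lemma feynmanKac_cons (r F : Y → ℝ≥0∞) (n : ℕ) (y : Y) (v : Fin (n + 1) → Y) :
    feynmanKac r F (n + 1) (Fin.cons y v : Fin (n + 2) → Y) = r y * feynmanKac r F n v := by
  simp only [feynmanKac, Fin.prod_univ_succ, ← Fin.succ_last, Fin.castSucc_zero,
    ← Fin.succ_castSucc, Fin.cons_zero, Fin.cons_succ]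
  ring

variable [MeasurableSpace Y]

lemma iterMeas_succ' (Q : Kernel Y Y) (μ : Measure Y) (n : ℕ) :
    iterMeas Q μ (n + 1) = iterMeas Q (Q ∘ₘ μ) n := by
  induction n with
  | zero => rfl
  | succ n ih => exact congrArg (Q ∘ₘ ·) ih

instance isFiniteMeasure_iterMeas (Q : Kernel Y Y) [IsFiniteKernel Q] (μ : Measure Y)
    [IsFiniteMeasure μ] (n : ℕ) : IsFiniteMeasure (iterMeas Q μ n) := by
  induction n with
  | zero => assumption
  | succ n ih => exact inferInstanceAs (IsFiniteMeasure (Q ∘ₘ iterMeas Q μ n))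

lemma kexp_const_mul (κ : Kernel Y Y) {a : ℝ≥0∞} (ha : a ≠ ∞) (n : ℕ) (y : Y)
    (Φ : (Fin (n + 1) → Y) → ℝ≥0∞) : kexp κ n y (fun v => a * Φ v) = a * kexp κ n y Φ := by
  induction n generalizing y with
  | zero => rfl
  | succ n ih => simp only [kexp, ih, lintegral_const_mul' _ _ ha]

variable {κ Q : Kernel Y Y} {r F : Y → ℝ≥0∞}

lemma kexp_feynmanKac_succ (hQ : ∀ y, Q y = r y • κ y) (hr : ∀ y, r y ≠ ∞) (n : ℕ) (y : Y) :
    kexp κ (n + 1) y (feynmanKac r F (n + 1)) =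
      ∫⁻ y', kexp κ n y' (feynmanKac r F n) ∂(Q y) := by
  simp only [kexp, feynmanKac_cons, kexp_const_mul κ (hr y), hQ, lintegral_smul_measure,
    lintegral_const_mul' _ _ (hr y), smul_eq_mul]

lemma measurable_kexp_feynmanKac (hQ : ∀ y, Q y = r y • κ y) (hr : ∀ y, r y ≠ ∞)
    (hF : Measurable F) (n : ℕ) : Measurable fun y => kexp κ n y (feynmanKac r F n) := by
  induction n with
  | zero => simpa [kexp, feynmanKac] using hF
  | succ n ih =>
    simp only [kexp_feynmanKac_succ hQ hr]
    exact ih.lintegral_kernel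

theorem chainExp_feynmanKac (hQ : ∀ y, Q y = r y • κ y) (hr : ∀ y, r y ≠ ∞)
    (hF : Measurable F) (μ : Measure Y) (n : ℕ) :
    chainExp κ μ n (feynmanKac r F n) = ∫⁻ y, F y ∂(iterMeas Q μ n) := by
  induction n generalizing μ with
  | zero => simp [chainExp, kexp, feynmanKac, iterMeas]
  | succ n ih =>
    rw [iterMeas_succ', ← ih, chainExp, chainExp, Measure.lintegral_bind Q.aemeasurable
      (measurable_kexp_feynmanKac hQ hr hF n).aemeasurable]
    simp only [kexp_feynmanKac_succ hQ hr]

end FeynmanKac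

section Marginals

variable {X Y Z : Type*} [MeasurableSpace X] [MeasurableSpace Y] [MeasurableSpace Z]

lemma comp_measure_fst (κ : Kernel X Z) (ρ : Measure (X × Y)) :
    κ ∘ₘ ρ.fst = κ.prodMkRight Y ∘ₘ ρ := by
  rw [Measure.fst, ← Measure.deterministic_comp_eq_map measurable_fst, Measure.comp_assoc,
    Kernel.comp_deterministic_eq_comap, Kernel.prodMkRight]

lemma comp_measure_snd (κ : Kernel Y Z) (ρ : Measure (X × Y)) :
    κ ∘ₘ ρ.snd = κ.prodMkLeft X ∘ₘ ρ := by
  rw [Measure.snd, ← Measure.deterministic_comp_eq_map measurable_snd, Measure.comp_assoc,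
    Kernel.comp_deterministic_eq_comap, Kernel.prodMkLeft]

lemma fst_comp_measure (κ : Kernel Z (X × Y)) (μ : Measure Z) : (κ ∘ₘ μ).fst = κ.fst ∘ₘ μ := by
  rw [Measure.fst, Measure.map_comp μ κ measurable_fst, Kernel.fst_eq]

lemma snd_comp_measure (κ : Kernel Z (X × Y)) (μ : Measure Z) : (κ ∘ₘ μ).snd = κ.snd ∘ₘ μ := by
  rw [Measure.snd, Measure.map_comp μ κ measurable_snd, Kernel.snd_eq]

end Marginals

/-- `ρ` represents the difference of `μ` and `μ'`: `μ - μ' = ρ.fst - ρ.snd`, written without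
subtraction. A coupling of `μ` and `μ'` does so, and still does after the removal of any mass that
contributes equally to both marginals. -/
def IsDifferenceCoupling {X : Type*} [MeasurableSpace X] (ρ : Measure (X × X))
    (μ μ' : Measure X) : Prop :=
  μ + ρ.snd = μ' + ρ.fst

namespace IsDifferenceCoupling

variable {X : Type*} [MeasurableSpace X] {ρ : Measure (X × X)} {μ μ' : Measure X}

lemma of_common_part {η : Measure X} (hμ : ρ.fst + η = μ) (hμ' : ρ.snd + η = μ') :
    IsDifferenceCoupling ρ μ μ' := by
  rw [IsDifferenceCoupling, ← hμ, ← hμ']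
  abel

lemma of_fst_snd (hμ : ρ.fst = μ) (hμ' : ρ.snd = μ') : IsDifferenceCoupling ρ μ μ' := by
  rw [IsDifferenceCoupling, hμ, hμ', add_comm]

variable {P : Kernel X X} {Q : Kernel (X × X) (X × X)}

lemma comp [IsFiniteKernel P] [IsFiniteMeasure ρ] (hρ : IsDifferenceCoupling ρ μ μ')
    (hQ : ∀ p, IsDifferenceCoupling (Q p) (P p.1) (P p.2)) :
    IsDifferenceCoupling (Q ∘ₘ ρ) (P ∘ₘ μ) (P ∘ₘ μ') := by
  have one_step : P ∘ₘ ρ.fst + (Q ∘ₘ ρ).snd = P ∘ₘ ρ.snd + (Q ∘ₘ ρ).fst := by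
    have kernel_eq : P.prodMkRight X + Q.snd = P.prodMkLeft X + Q.fst := by
      ext1 p
      simp only [add_apply, Kernel.prodMkRight_apply, Kernel.prodMkLeft_apply,
        Kernel.fst_apply, Kernel.snd_apply]
      exact hQ p
    rw [comp_measure_fst, comp_measure_snd, fst_comp_measure, snd_comp_measure,
      ← Measure.add_comp, kernel_eq, Measure.add_comp]
  have initial : P ∘ₘ μ + P ∘ₘ ρ.snd = P ∘ₘ μ' + P ∘ₘ ρ.fst := by
    rw [← Measure.comp_add, hρ, Measure.comp_add]
  rw [IsDifferenceCoupling, ← Measure.add_left_inj (P ∘ₘ ρ.fst + P ∘ₘ ρ.snd)]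
  calc P ∘ₘ μ + (Q ∘ₘ ρ).snd + (P ∘ₘ ρ.fst + P ∘ₘ ρ.snd)
      = (P ∘ₘ μ + P ∘ₘ ρ.snd) + (P ∘ₘ ρ.fst + (Q ∘ₘ ρ).snd) := by abel
    _ = (P ∘ₘ μ' + P ∘ₘ ρ.fst) + (P ∘ₘ ρ.snd + (Q ∘ₘ ρ).fst) := by rw [initial, one_step]
    _ = P ∘ₘ μ' + (Q ∘ₘ ρ).fst + (P ∘ₘ ρ.fst + P ∘ₘ ρ.snd) := by abel

protected lemma iterMeas [IsFiniteKernel P] [IsFiniteKernel Q] [IsFiniteMeasure ρ]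
    (hρ : IsDifferenceCoupling ρ μ μ')
    (hQ : ∀ p, IsDifferenceCoupling (Q p) (P p.1) (P p.2)) (n : ℕ) :
    IsDifferenceCoupling (iterMeas Q ρ n) (iterMeas P μ n) (iterMeas P μ' n) := by
  induction n with
  | zero => exact hρ
  | succ n ih => exact ih.comp hQ

lemma enorm_integral_sub_le {E : Type*} [NormedAddCommGroup E] [NormedSpace ℝ E]
    (h : IsDifferenceCoupling ρ μ μ') {φ : X → E} (hφ : StronglyMeasurable φ)
    (hμ : Integrable φ μ) (hμ' : Integrable φ μ') :
    ‖∫ x, φ x ∂μ - ∫ x, φ x ∂μ'‖ₑ ≤ ∫⁻ p, (‖φ p.1‖ₑ + ‖φ p.2‖ₑ) ∂ρ := by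
  have marginals : ∫⁻ p, (‖φ p.1‖ₑ + ‖φ p.2‖ₑ) ∂ρ =
      ∫⁻ x, ‖φ x‖ₑ ∂ρ.fst + ∫⁻ x, ‖φ x‖ₑ ∂ρ.snd := by
    rw [lintegral_add_left (by fun_prop), Measure.fst, Measure.snd,
      lintegral_map hφ.enorm measurable_fst, lintegral_map hφ.enorm measurable_snd]
  rw [marginals]
  by_cases htop : ∫⁻ x, ‖φ x‖ₑ ∂ρ.fst + ∫⁻ x, ‖φ x‖ₑ ∂ρ.snd = ∞
  · exact htop ▸ le_top
  obtain ⟨hfst, hsnd⟩ := ENNReal.add_ne_top.1 htop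
  have intfst : Integrable φ ρ.fst := ⟨hφ.aestronglyMeasurable, hfst.lt_top⟩
  have intsnd : Integrable φ ρ.snd := ⟨hφ.aestronglyMeasurable, hsnd.lt_top⟩
  have difference : ∫ x, φ x ∂μ - ∫ x, φ x ∂μ' = ∫ x, φ x ∂ρ.fst - ∫ x, φ x ∂ρ.snd := by
    rw [sub_eq_sub_iff_add_eq_add, ← integral_add_measure hμ intsnd, h,
      integral_add_measure hμ' intfst, add_comm]
  rw [difference]
  exact enorm_sub_le.trans
    (add_le_add (enorm_integral_le_lintegral_enorm _) (enorm_integral_le_lintegral_enorm _))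

lemma pow_indicator_smul {κ : Kernel (X × X) (X × X)}
    {C : Set (X × X)} {ν : X × X → Measure X} {a b : ℝ≥0∞}
    (hfst : ∀ p ∈ C, ∀ A : Set X, MeasurableSet A →
      a * κ p (A ×ˢ Set.univ) + b * ν p A = P p.1 A)
    (hsnd : ∀ p ∈ C, ∀ A : Set X, MeasurableSet A →
      a * κ p (Set.univ ×ˢ A) + b * ν p A = P p.2 A)
    (hcompl : ∀ p ∉ C, ∀ A : Set X, MeasurableSet A →
      κ p (A ×ˢ Set.univ) = P p.1 A ∧ κ p (Set.univ ×ˢ A) = P p.2 A) (p : X × X) :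
    IsDifferenceCoupling (a ^ C.indicator (fun _ => (1 : ℕ)) p • κ p) (P p.1) (P p.2) := by
  by_cases hp : p ∈ C
  · rw [Set.indicator_of_mem hp, pow_one]
    refine .of_common_part (η := b • ν p) (Measure.ext fun A hA => ?_) (Measure.ext fun A hA => ?_)
    · simpa [Measure.fst_apply hA, Set.prod_univ] using hfst p hp A hA
    · simpa [Measure.snd_apply hA, Set.univ_prod] using hsnd p hp A hA
  · rw [Set.indicator_of_notMem hp, pow_zero, one_smul]
    refine .of_fst_snd (Measure.ext fun A hA => ?_) (Measure.ext fun A hA => ?_)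
    · simpa [Measure.fst_apply hA, Set.prod_univ] using (hcompl p hp A hA).1
    · simpa [Measure.snd_apply hA, Set.univ_prod] using (hcompl p hp A hA).2

end IsDifferenceCoupling

theorem coupling_inequality_general {X E : Type*} [MeasurableSpace X] [NormedAddCommGroup E]
    [NormedSpace ℝ E] [CompleteSpace E] (P : Kernel X X) [IsFiniteKernel P]
    (κ : Kernel (X × X) (X × X)) [IsFiniteKernel κ] {r : X × X → ℝ≥0∞} (hr : Measurable r)
    {B : ℝ≥0∞} (hB : B ≠ ∞) (hrB : ∀ p, r p ≤ B)
    (hκ : ∀ p, IsDifferenceCoupling (r p • κ p) (P p.1) (P p.2))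
    {γ : Measure (X × X)} [IsFiniteMeasure γ] {ξ ξ' : Measure X}
    (hγ : IsDifferenceCoupling γ ξ ξ') (n : ℕ)
    {f : X → ℝ} (hf0 : ∀ x, 0 ≤ f x) (hf : Measurable f)
    {φ : X → E} (hφ : StronglyMeasurable φ) {c : ℝ} (hc : ∀ x, ‖φ x‖ ≤ c * f x)
    (hφint : Integrable φ (iterMeas P ξ n)) (hφint' : Integrable φ (iterMeas P ξ' n)) :
    ‖∫ x, φ x ∂(iterMeas P ξ n) - ∫ x, φ x ∂(iterMeas P ξ' n)‖ₑ ≤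
      ENNReal.ofReal c * chainExp κ γ n
        (feynmanKac r (fun p => ENNReal.ofReal (f p.1) + ENNReal.ofReal (f p.2)) n) := by
  let Q : Kernel (X × X) (X × X) := κ.withDensity fun p _ => r p
  have hQ (p) : Q p = r p • κ p := by
    rw [Kernel.withDensity_apply κ (by fun_prop), withDensity_const]
  have : IsFiniteKernel Q := κ.isFiniteKernel_withDensity_of_bounded hB fun p _ => hrB p
  have hn : IsDifferenceCoupling (iterMeas Q γ n) (iterMeas P ξ n) (iterMeas P ξ' n) :=
    hγ.iterMeas (fun p => hQ p ▸ hκ p) n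
  have hφf (x) : ‖φ x‖ₑ ≤ ENNReal.ofReal c * ENNReal.ofReal (f x) := by
    rw [← ofReal_norm, ← ENNReal.ofReal_mul' (hf0 x)]
    exact ENNReal.ofReal_le_ofReal (hc x)
  let F : X × X → ℝ≥0∞ := fun p => ENNReal.ofReal (f p.1) + ENNReal.ofReal (f p.2)
  have hF : Measurable F := by fun_prop
  calc ‖∫ x, φ x ∂(iterMeas P ξ n) - ∫ x, φ x ∂(iterMeas P ξ' n)‖ₑ
      ≤ ∫⁻ p, (‖φ p.1‖ₑ + ‖φ p.2‖ₑ) ∂(iterMeas Q γ n) := hn.enorm_integral_sub_le hφ hφint hφint'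
    _ ≤ ∫⁻ p, ENNReal.ofReal c * F p ∂(iterMeas Q γ n) :=
        lintegral_mono fun p => (add_le_add (hφf p.1) (hφf p.2)).trans_eq (mul_add ..).symm
    _ = ENNReal.ofReal c * ∫⁻ p, F p ∂(iterMeas Q γ n) := lintegral_const_mul _ hF
    _ = ENNReal.ofReal c * chainExp κ γ n (feynmanKac r F n) := by
        rw [chainExp_feynmanKac hQ (fun p => ne_top_of_le_ne_top hB (hrB p)) hF]

/-- The key coupling inequality (9):
`|ξPⁿφ - ξ'Pⁿφ| ≤ (sup |φ|/f) E*_{ξ⊗ξ'}[(f(Xₙ) + f(X'ₙ))(1-ε)^{N_{n-1}}]`. -/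
theorem coupling_inequality
    {X : Type*} [MeasurableSpace X] (P : Kernel X X) [IsMarkovKernel P]
    -- (A1)
    (Cbar : Set (X × X)) (hCbar : MeasurableSet Cbar)
    (ε : ℝ) (hε0 : 0 < ε) (hε1 : ε < 1)
    (ν : X × X → Measure X) (hν : ∀ p ∈ Cbar, IsProbabilityMeasure (ν p))
    (hminor : ∀ p ∈ Cbar, ∀ A : Set X, MeasurableSet A →
      ENNReal.ofReal ε * ν p A ≤ min (P p.1 A) (P p.2 A))
    -- the residual kernel R̄
    (Rbar : Kernel (X × X) (X × X)) [IsMarkovKernel Rbar]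
    (hRbar1 : ∀ p ∈ Cbar, ∀ A : Set X, MeasurableSet A →
      ENNReal.ofReal (1 - ε) * Rbar p (A ×ˢ Set.univ) + ENNReal.ofReal ε * ν p A = P p.1 A)
    (hRbar2 : ∀ p ∈ Cbar, ∀ A : Set X, MeasurableSet A →
      ENNReal.ofReal (1 - ε) * Rbar p (Set.univ ×ˢ A) + ENNReal.ofReal ε * ν p A = P p.2 A)
    -- the kernel P̄
    (Pbar : Kernel (X × X) (X × X)) [IsMarkovKernel Pbar]
    (hPbar1 : ∀ p ∈ Cbar, ∀ A A' : Set X, MeasurableSet A → MeasurableSet A' →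
      Pbar p (A ×ˢ A') = ENNReal.ofReal (1 - ε) * Rbar p (A ×ˢ A') +
        ENNReal.ofReal ε * ν p (A ∩ A'))
    (hPbar2 : ∀ p ∉ Cbar, ∀ A : Set X, MeasurableSet A →
      Pbar p (A ×ˢ Set.univ) = P p.1 A ∧ Pbar p (Set.univ ×ˢ A) = P p.2 A)
    -- the kernel P*
    (Pstar : Kernel (X × X) (X × X))
    (hPstar1 : ∀ p ∈ Cbar, Pstar p = Rbar p) (hPstar2 : ∀ p ∉ Cbar, Pstar p = Pbar p)
    (ξ ξ' : Measure X) [IsProbabilityMeasure ξ] [IsProbabilityMeasure ξ']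
    (n : ℕ) (hn : 1 ≤ n)
    (f : X → ℝ) (hf1 : ∀ x, 1 ≤ f x) (hfm : Measurable f)
    (φ : X → ℝ) (hφm : Measurable φ)
    (c : ℝ) (hc : ∀ x, |φ x| ≤ c * f x)
    (hφint : Integrable φ (iterMeas P ξ n)) (hφint' : Integrable φ (iterMeas P ξ' n)) :
    ENNReal.ofReal |∫ x, φ x ∂(iterMeas P ξ n) - ∫ x, φ x ∂(iterMeas P ξ' n)| ≤
      ENNReal.ofReal c * chainExp Pstar (ξ.prod ξ') n
        (fun v => (ENNReal.ofReal (f (v (Fin.last n)).1) + ENNReal.ofReal (f (v (Fin.last n)).2)) *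
          ENNReal.ofReal (1 - ε) ^
            (∑ i : Fin n, Set.indicator Cbar (fun _ => (1 : ℕ)) (v i.castSucc))) := by
  have : IsMarkovKernel Pstar := ⟨fun p => by
    by_cases hp : p ∈ Cbar
    exacts [hPstar1 p hp ▸ inferInstance, hPstar2 p hp ▸ inferInstance]⟩
  have hPstar := IsDifferenceCoupling.pow_indicator_smul
    (fun p hp => hPstar1 p hp ▸ hRbar1 p hp) (fun p hp => hPstar1 p hp ▸ hRbar2 p hp)
    (fun p hp => hPstar2 p hp ▸ hPbar2 p hp)
  have hrate : ENNReal.ofReal (1 - ε) ≤ 1 := ENNReal.ofReal_le_one.2 (sub_le_self 1 hε0.le)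
  simpa only [feynmanKac_pow, Real.enorm_eq_ofReal_abs] using
    coupling_inequality_general P Pstar ((measurable_const.indicator hCbar).const_pow _)
      ENNReal.one_ne_top (fun _ => pow_le_one' hrate _) hPstar
      (.of_fst_snd Measure.fst_prod Measure.snd_prod) n
      (fun x => zero_le_one.trans (hf1 x)) hfm hφm.stronglyMeasurable hc hφint hφint'
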